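/- (Composition of reward transformations.) Let S be a pGCL program and let f, g : ℝ≥0∞ → ℝ≥0∞ be monotone. Assume the auxiliary transformations T'_f and T'_{g∘f} both use the same fresh ghost variable τ, while T'_g uses a different fresh ghost variable τ'. Then for every expectation X, wp[τ' := f(τ); T'_g(T'_f(S))](X) = wp[T'_{g∘f}(S); τ' := f(τ)](X); equivalently, wp[T'_g(T'_f(S))](X)[τ' ↦ f(τ)] = wp[T'_{g∘f}(S)](X[τ' ↦ f(τ)]). -/

import Mathlib

open ENNReal

/-- Program states: maps from variables to extended non-negative reals. -/
abbrev PState (V : Type) := V → ℝ≥0∞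

/-- Expectations: maps from states to extended non-negative reals. -/
abbrev Expct (V : Type) := PState V → ℝ≥0∞

/-- Syntax of pGCL programs. -/
inductive pGCL (V : Type) : Type 1
  | skip : pGCL V
  | assign : V → Expct V → pGCL V
  | reward : Expct V → pGCL V
  | seq : pGCL V → pGCL V → pGCL V
  | prob : (p : ℝ≥0∞) → p ≤ 1 → pGCL V → pGCL V → pGCL V
  | ifte : (PState V → Bool) → pGCL V → pGCL V → pGCL V
  | loop : (PState V → Bool) → pGCL V → pGCL V

variable {V : Type} [DecidableEq V]

/-- The weakest pre-expectation transformer, bundled as an order hom. -/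
noncomputable def wpHom : pGCL V → (Expct V →o Expct V)
  | .skip => OrderHom.id
  | .assign x e => ⟨fun X σ => X (Function.update σ x (e σ)), fun _ _ h σ => h _⟩
  | .reward e => ⟨fun X σ => e σ + X σ, fun _ _ h σ => add_le_add le_rfl (h σ)⟩
  | .seq S₁ S₂ => (wpHom S₁).comp (wpHom S₂)
  | .prob p _ S₁ S₂ =>
      ⟨fun X σ => p * wpHom S₁ X σ + (1 - p) * wpHom S₂ X σ, by
        intro X Y h σ
        exact add_le_add (mul_le_mul' le_rfl ((wpHom S₁).monotone h σ))
          (mul_le_mul' le_rfl ((wpHom S₂).monotone h σ))⟩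
  | .ifte b S₁ S₂ =>
      ⟨fun X σ => if b σ then wpHom S₁ X σ else wpHom S₂ X σ, by
        intro X Y h σ
        dsimp only
        split
        · exact (wpHom S₁).monotone h σ
        · exact (wpHom S₂).monotone h σ⟩
  | .loop b S =>
      ⟨fun X => OrderHom.lfp
        ⟨fun Y σ => if b σ then wpHom S Y σ else X σ, by
          intro Y₁ Y₂ h σ
          dsimp only
          split
          · exact (wpHom S).monotone h σ
          · exact le_rfl⟩, by
        intro X₁ X₂ h
        apply OrderHom.lfp_le
        have := OrderHom.map_lfp
          (⟨fun Y σ => if b σ then wpHom S Y σ else X₂ σ, by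
            intro Y₁ Y₂ h σ
            dsimp only
            split
            · exact (wpHom S).monotone h σ
            · exact le_rfl⟩ : Expct V →o Expct V)
        refine le_trans (fun σ => ?_) (le_of_eq this)
        change (if b σ then _ else X₁ σ) ≤ (if b σ then _ else X₂ σ)
        split_ifs
        · exact le_rfl
        · exact h σ⟩

/-- The weakest pre-expectation `wp[S](X)`. -/
noncomputable def wp (S : pGCL V) (X : Expct V) : Expct V := wpHom S X

/-- An expression does not depend on variable `τ`. -/
def UnusedE (τ : V) (e : Expct V) : Prop := ∀ σ v, e (Function.update σ τ v) = e σ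

/-- A Boolean guard does not depend on variable `τ`. -/
def UnusedB (τ : V) (b : PState V → Bool) : Prop := ∀ σ v, b (Function.update σ τ v) = b σ

/-- Variable `τ` does not occur in the program `S`. -/
def NotOccurs (τ : V) : pGCL V → Prop
  | .skip => True
  | .assign x e => x ≠ τ ∧ UnusedE τ e
  | .reward e => UnusedE τ e
  | .seq S₁ S₂ => NotOccurs τ S₁ ∧ NotOccurs τ S₂
  | .prob _ _ S₁ S₂ => NotOccurs τ S₁ ∧ NotOccurs τ S₂
  | .ifte b S₁ S₂ => UnusedB τ b ∧ NotOccurs τ S₁ ∧ NotOccurs τ S₂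
  | .loop b S => UnusedB τ b ∧ NotOccurs τ S

/-- Auxiliary reward transformation `T'_f` with ghost variable `τ`:
replaces `reward(e)` by `reward(f(τ+e) − f(τ)); τ := τ + e`. -/
noncomputable def Taux (τ : V) (f : ℝ≥0∞ → ℝ≥0∞) : pGCL V → pGCL V
  | .reward e =>
      .seq (.reward fun σ => f (σ τ + e σ) - f (σ τ)) (.assign τ (fun σ => σ τ + e σ))
  | .seq S₁ S₂ => .seq (Taux τ f S₁) (Taux τ f S₂)
  | .prob p hp S₁ S₂ => .prob p hp (Taux τ f S₁) (Taux τ f S₂)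
  | .ifte b S₁ S₂ => .ifte b (Taux τ f S₁) (Taux τ f S₂)
  | .loop b S => .loop b (Taux τ f S)
  | .skip => .skip
  | .assign x e => .assign x e

/-- Full reward transformation `T_f(S) = τ := 0; reward(f(0)); T'_f(S)`. -/
noncomputable def Tfull (τ : V) (f : ℝ≥0∞ → ℝ≥0∞) (S : pGCL V) : pGCL V :=
  .seq (.assign τ (fun _ => 0)) (.seq (.reward fun _ => f 0) (Taux τ f S))

/-!
Once `τ'` holds `f(τ)`, the ghost updates keep it so: monotonicity of `f` gives
`f(τ) + (f(τ + e) − f(τ)) = f(τ + e)`, although the difference is truncated. Hence the reward that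
`T'_g` charges on `τ'` is the one that `T'_{g ∘ f}` charges on `τ`. For loops, least fixed points
must commute with the substitution `τ' ↦ f(τ)`; they do without any continuity of `wp`, because
precomposition with a map of states has a right adjoint, the infimum over its fibres.
-/

theorem lfp_eq_of_galoisConnection {α β : Type*} [CompleteLattice α] [CompleteLattice β]
    {l : α → β} {u : β → α} (gc : GaloisConnection l u) {Φ : α →o α} {Ψ : β →o β}
    (h : Function.Semiconj l Φ Ψ) : l Φ.lfp = Ψ.lfp := by
  apply le_antisymm
  · have prefixed : Φ (u Ψ.lfp) ≤ u Ψ.lfp := gc.le_u <|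
      calc l (Φ (u Ψ.lfp)) = Ψ (l (u Ψ.lfp)) := h.eq _
        _ ≤ Ψ.lfp := Ψ.map_le_lfp (gc.l_u_le _)
    exact gc.l_le (Φ.lfp_le prefixed)
  · exact Ψ.lfp_le_fixed (by rw [← h.eq, Φ.map_lfp])

theorem galoisConnection_comp_right {A B L : Type*} [CompleteLattice L] (h : A → B) :
    GaloisConnection (fun Y : B → L => Y ∘ h) (fun X b => ⨅ (a) (_ : h a = b), X a) := by
  intro Y X
  simp only [Pi.le_def, le_iInf_iff, Function.comp_apply]
  exact ⟨fun le b a hab => hab ▸ le a, fun le a => le (h a) a rfl⟩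

/-- The characteristic functional `Y ↦ [b]·wp[S](Y) + [¬b]·X` of the loop `while(b){S}` with
respect to the postexpectation `X`. -/
noncomputable def loopFunctional (b : PState V → Bool) (S : pGCL V) (X : Expct V) :
    Expct V →o Expct V where
  toFun Y σ := if b σ then wp S Y σ else X σ
  monotone' Y₁ Y₂ hY σ := by
    dsimp only
    split_ifs
    · exact (wpHom S).monotone hY σ
    · exact le_rfl

theorem wp_loop (b : PState V → Bool) (S : pGCL V) (X : Expct V) :
    wp (.loop b S) X = (loopFunctional b S X).lfp :=
  rfl

/-- `WpSemiconj h S S'` says that `wp[S](X) ∘ h = wp[S'](X ∘ h)` for every `X`. When `h` is the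
effect of an assignment `A`, this is the program equivalence of `A; S` and `S'; A`. -/
def WpSemiconj {W : Type} [DecidableEq W] (h : PState W → PState V) (S : pGCL V)
    (S' : pGCL W) : Prop :=
  Function.Semiconj (fun X : Expct V => X ∘ h) (wp S) (wp S')

namespace WpSemiconj

variable {W : Type} [DecidableEq W] {h : PState W → PState V}

theorem skip : WpSemiconj h .skip .skip :=
  fun _ => rfl

theorem assign {x : V} {y : W} {e : Expct V} {e' : Expct W}
    (comm : ∀ σ, Function.update (h σ) x (e (h σ)) = h (Function.update σ y (e' σ))) :
    WpSemiconj h (.assign x e) (.assign y e') :=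
  fun X => funext fun σ => congrArg X (comm σ)

theorem reward {e : Expct V} {e' : Expct W} (he : ∀ σ, e (h σ) = e' σ) :
    WpSemiconj h (.reward e) (.reward e') :=
  fun X => funext fun σ => congrArg (· + X (h σ)) (he σ)

variable {S S₁ S₂ : pGCL V} {S' S₁' S₂' : pGCL W}

theorem seq (h₁ : WpSemiconj h S₁ S₁') (h₂ : WpSemiconj h S₂ S₂') :
    WpSemiconj h (.seq S₁ S₂) (.seq S₁' S₂') :=
  show Function.Semiconj _ (wp S₁ ∘ wp S₂) (wp S₁' ∘ wp S₂') from h₁.comp_right h₂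

theorem prob {p : ℝ≥0∞} (hp : p ≤ 1) (h₁ : WpSemiconj h S₁ S₁') (h₂ : WpSemiconj h S₂ S₂') :
    WpSemiconj h (.prob p hp S₁ S₂) (.prob p hp S₁' S₂') := fun X => funext fun σ =>
  congrArg₂ (fun r s => p * r + (1 - p) * s) (congrFun (h₁ X) σ) (congrFun (h₂ X) σ)

theorem ifte {b : PState V → Bool} {b' : PState W → Bool} (hb : ∀ σ, b (h σ) = b' σ)
    (h₁ : WpSemiconj h S₁ S₁') (h₂ : WpSemiconj h S₂ S₂') :
    WpSemiconj h (.ifte b S₁ S₂) (.ifte b' S₁' S₂') := by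
  intro X
  funext σ
  change (if b (h σ) then wp S₁ X (h σ) else wp S₂ X (h σ)) =
    if b' σ then wp S₁' (X ∘ h) σ else wp S₂' (X ∘ h) σ
  rw [hb, ← h₁ X, ← h₂ X]
  rfl

theorem loop {b : PState V → Bool} {b' : PState W → Bool} (hb : ∀ σ, b (h σ) = b' σ)
    (hS : WpSemiconj h S S') : WpSemiconj h (.loop b S) (.loop b' S') := by
  intro X
  have functional_semiconj : Function.Semiconj (fun Y : Expct V => Y ∘ h)
      (loopFunctional b S X) (loopFunctional b' S' (X ∘ h)) := by
    intro Y
    funext σ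
    change (if b (h σ) then wp S Y (h σ) else X (h σ)) =
      if b' σ then wp S' (Y ∘ h) σ else X (h σ)
    rw [hb, ← hS Y]
    rfl
  simp only [wp_loop]
  exact lfp_eq_of_galoisConnection (galoisConnection_comp_right h) functional_semiconj

end WpSemiconj

/-- The program never assigns to `τ`, although it may read it. -/
def NotAssigned {U : Type} (τ : U) : pGCL U → Prop
  | .skip | .reward _ => True
  | .assign x _ => x ≠ τ
  | .seq S₁ S₂ | .prob _ _ S₁ S₂ | .ifte _ S₁ S₂ => NotAssigned τ S₁ ∧ NotAssigned τ S₂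
  | .loop _ S => NotAssigned τ S

theorem NotOccurs.notAssigned {τ : V} {S : pGCL V} (hS : NotOccurs τ S) : NotAssigned τ S := by
  induction S with
  | skip | reward => trivial
  | assign => exact hS.1
  | seq _ _ ih₁ ih₂ | prob _ _ _ _ ih₁ ih₂ => exact ⟨ih₁ hS.1, ih₂ hS.2⟩
  | ifte _ _ _ ih₁ ih₂ => exact ⟨ih₁ hS.2.1, ih₂ hS.2.2⟩
  | loop _ _ ih => exact ih hS.2

/-- The effect of the assignment `τ' := f(τ)` on states; precomposing an expectation with it is the
substitution `X[τ' ↦ f(τ)]`. -/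
def assignImage (f : ℝ≥0∞ → ℝ≥0∞) (τ τ' : V) (σ : PState V) : PState V :=
  Function.update σ τ' (f (σ τ))

section assignImage

variable {f : ℝ≥0∞ → ℝ≥0∞} {τ τ' : V}

theorem assignImage_apply_source (hne : τ ≠ τ') (σ : PState V) : assignImage f τ τ' σ τ = σ τ :=
  Function.update_of_ne hne _ _

theorem assignImage_apply_target (σ : PState V) : assignImage f τ τ' σ τ' = f (σ τ) :=
  Function.update_self _ _ _

theorem UnusedE.apply_assignImage {e : Expct V} (he : UnusedE τ' e) (σ : PState V) :
    e (assignImage f τ τ' σ) = e σ :=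
  he σ _

theorem update_assignImage_of_ne {x : V} (hx : x ≠ τ) (hx' : x ≠ τ') (σ : PState V) (v : ℝ≥0∞) :
    Function.update (assignImage f τ τ' σ) x v = assignImage f τ τ' (Function.update σ x v) := by
  rw [assignImage, assignImage, Function.update_of_ne hx.symm, Function.update_comm hx'.symm]

theorem update_update_assignImage (hne : τ ≠ τ') (σ : PState V) (t : ℝ≥0∞) :
    Function.update (Function.update (assignImage f τ τ' σ) τ' (f t)) τ t =
      assignImage f τ τ' (Function.update σ τ t) := by
  rw [assignImage, assignImage, Function.update_idem, Function.update_self,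
    Function.update_comm hne]

end assignImage

theorem wpSemiconj_Taux_reward {f : ℝ≥0∞ → ℝ≥0∞} (g : ℝ≥0∞ → ℝ≥0∞) (hf : Monotone f) {τ τ' : V}
    (hne : τ ≠ τ') {e : Expct V} (he : UnusedE τ' e) :
    WpSemiconj (assignImage f τ τ') (Taux τ' g (Taux τ f (.reward e)))
      (Taux τ (g ∘ f) (.reward e)) := by
  let ghostIncrement : Expct V := fun σ => f (σ τ + e σ) - f (σ τ)
  have ghost_update (σ : PState V) :
      assignImage f τ τ' σ τ' + ghostIncrement (assignImage f τ τ' σ) = f (σ τ + e σ) := by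
    simp only [ghostIncrement, assignImage_apply_target, assignImage_apply_source hne,
      he.apply_assignImage]
    exact add_tsub_cancel_of_le (hf le_self_add)
  have same_reward : WpSemiconj (assignImage f τ τ')
      (.reward fun σ => g (σ τ' + ghostIncrement σ) - g (σ τ'))
      (.reward fun σ => g (f (σ τ + e σ)) - g (f (σ τ))) :=
    .reward fun σ => by rw [ghost_update, assignImage_apply_target]
  have same_update : WpSemiconj (assignImage f τ τ')
      (.seq (.assign τ' fun σ => σ τ' + ghostIncrement σ) (.assign τ fun σ => σ τ + e σ))
      (.assign τ fun σ => σ τ + e σ) := by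
    refine fun X => funext fun σ => congrArg X ?_
    dsimp only
    rw [ghost_update, Function.update_of_ne hne, assignImage_apply_source hne, he,
      he.apply_assignImage, update_update_assignImage hne]
  -- `wp` identifies `(S₁; S₂); S₃` with `S₁; (S₂; S₃)` definitionally.
  exact same_reward.seq same_update

theorem wpSemiconj_Taux_comp {f : ℝ≥0∞ → ℝ≥0∞} (g : ℝ≥0∞ → ℝ≥0∞) (hf : Monotone f) {τ τ' : V}
    (hne : τ ≠ τ') {S : pGCL V} (hτ : NotAssigned τ S) (hτ' : NotOccurs τ' S) :
    WpSemiconj (assignImage f τ τ') (Taux τ' g (Taux τ f S)) (Taux τ (g ∘ f) S) := by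
  induction S with
  | skip => exact .skip
  | assign x e =>
    refine .assign fun σ => ?_
    rw [hτ'.2.apply_assignImage, update_assignImage_of_ne hτ hτ'.1]
  | reward e => exact wpSemiconj_Taux_reward g hf hne hτ'
  | seq _ _ ih₁ ih₂ => exact .seq (ih₁ hτ.1 hτ'.1) (ih₂ hτ.2 hτ'.2)
  | prob _ hp _ _ ih₁ ih₂ => exact .prob hp (ih₁ hτ.1 hτ'.1) (ih₂ hτ.2 hτ'.2)
  | ifte _ _ _ ih₁ ih₂ => exact .ifte (hτ'.1 · _) (ih₁ hτ.1 hτ'.2.1) (ih₂ hτ.2 hτ'.2.2)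
  | loop _ _ ih => exact .loop (hτ'.1 · _) (ih hτ hτ'.2)

theorem wp_Taux_comp_general (S : pGCL V) (f g : ℝ≥0∞ → ℝ≥0∞) (hf : Monotone f) (τ τ' : V)
    (hne : τ ≠ τ') (hassign : NotAssigned τ S) (hfresh : NotOccurs τ' S) (X : Expct V) :
    wp (.seq (.assign τ' (fun σ => f (σ τ))) (Taux τ' g (Taux τ f S))) X
      = wp (.seq (Taux τ (g ∘ f) S) (.assign τ' (fun σ => f (σ τ)))) X :=
  wpSemiconj_Taux_comp g hf hne hassign hfresh X

/-- Composition of reward transformations: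
`wp[τ' := f(τ); T'_g(T'_f(S))](X) = wp[T'_{g∘f}(S); τ' := f(τ)](X)`,
where `T'_f` and `T'_{g∘f}` use the ghost variable `τ` and `T'_g` uses `τ'`. -/
theorem wp_Taux_comp (S : pGCL V) (f g : ℝ≥0∞ → ℝ≥0∞)
    (hf : Monotone f) (hg : Monotone g) (τ τ' : V) (hne : τ ≠ τ')
    (hτ : NotOccurs τ S) (hτ' : NotOccurs τ' S) (X : Expct V) :
    wp (.seq (.assign τ' (fun σ => f (σ τ))) (Taux τ' g (Taux τ f S))) X
      = wp (.seq (Taux τ (g ∘ f) S) (.assign τ' (fun σ => f (σ τ)))) X := by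
  exact wp_Taux_comp_general S f g hf τ τ' hne hτ.notAssigned hτ' X
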